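/- The normal closure in B(4,3) of the set {P₁, P₂, P₃, P₄} equals the third term γ₃(B(4,3)) of the lower central series of B(4,3). -/

import Mathlib

/-!
A group of exponent 3 is 2-Engel, and in a 2-Engel group the triple commutators are central and
define an alternating trilinear form (Levi). So if `a, b, c, d` generate the group, `γ₃` is
generated by the four values `⁅⁅b, c⁆, d⁆`, `⁅⁅a, c⁆, d⁆`, `⁅⁅a, b⁆, d⁆`, `⁅⁅a, b⁆, c⁆`.

Take `(a, b, c, d) = (x₁, x₂⁻¹, x₃, x₄⁻¹)`, and let `p = a * b * c * d` and `q = d * c * b * a`.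
Then `P_i` is conjugate to `⁅q⁻¹ * p, q⁻¹ * x_i⁆`. Since `q⁻¹ * p` is a product of commutators, this
is a product of triple commutators, hence central, and it expands by trilinearity. In terms of the
four values above the resulting system is triangular with diagonal entries `-1`, so it can be solved
for them over `ℤ`.
-/

/-- The free Burnside group `B(4,3)` of exponent 3 on four generators:
the free group on four generators modulo the normal closure of all cubes. -/
abbrev B43 : Type :=
  FreeGroup (Fin 4) ⧸ Subgroup.normalClosure {w : FreeGroup (Fin 4) | ∃ v, w = v ^ 3}

/-- The images `x₁, x₂, x₃, x₄` of the free generators in `B(4,3)`. -/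
def x (i : Fin 4) : B43 := QuotientGroup.mk (FreeGroup.of i)

/-- The elements `P_i` of `B(4,3)`:
`P_i = x₁x₂⁻¹x₃x₄⁻¹x₁⁻¹x₂x₃⁻¹x₄ · x_i · x₄x₃⁻¹x₂x₁⁻¹x₄⁻¹x₃x₂⁻¹x₁ · x_i⁻¹`. -/
def P (i : Fin 4) : B43 :=
  x 0 * (x 1)⁻¹ * x 2 * (x 3)⁻¹ * (x 0)⁻¹ * x 1 * (x 2)⁻¹ * x 3 * x i *
    (x 3 * (x 2)⁻¹ * x 1 * (x 0)⁻¹ * (x 3)⁻¹ * x 2 * (x 1)⁻¹ * x 0) * (x i)⁻¹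

open scoped commutatorElement IsMulCommutative

theorem forall_of_forall_lt_of_symm {ι : Type*} [LinearOrder ι] {Q : ι → ι → ι → Prop}
    (swap_left : ∀ i j k, Q i j k → Q j i k) (swap_right : ∀ i j k, Q i j k → Q i k j)
    (self_right : ∀ i j, Q i j j) (h : ∀ i j k, i < j → j < k → Q i j k) (i j k : ι) :
    Q i j k := by
  have of_le {i j k : ι} (hij : i ≤ j) (hjk : j ≤ k) : Q i j k := by
    rcases hij.eq_or_lt with rfl | hij
    · exact swap_right _ _ _ (swap_left _ _ _ (self_right _ _))
    rcases hjk.eq_or_lt with rfl | hjk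
    · exact self_right _ _
    · exact h _ _ _ hij hjk
  rcases le_total i j with hij | hij <;> rcases le_total j k with hjk | hjk <;>
    rcases le_total i k with hik | hik <;> grind

theorem forall_fin_four_lt_iff {Q : Fin 4 → Fin 4 → Fin 4 → Prop} :
    (∀ i j k, i < j → j < k → Q i j k) ↔ Q 1 2 3 ∧ Q 0 2 3 ∧ Q 0 1 3 ∧ Q 0 1 2 := by
  refine ⟨fun h => ⟨h 1 2 3 (by decide) (by decide), h 0 2 3 (by decide) (by decide),
    h 0 1 3 (by decide) (by decide), h 0 1 2 (by decide) (by decide)⟩, ?_⟩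
  rintro ⟨h123, h023, h013, h012⟩ i j k hij hjk
  fin_cases i <;> fin_cases j <;> fin_cases k <;> first | assumption | contradiction

section Group

variable {G : Type*} [Group G] {u v w z : G}

theorem commutatorElement_mul_right_of_mem_center (hw : ⁅u, w⁆ ∈ Subgroup.center G) :
    ⁅u, z * w⁆ = ⁅u, z⁆ * ⁅u, w⁆ := by
  rw [commutatorElement_mul_right_eq_mul_conj, mul_assoc _ z, Subgroup.mem_center_iff.mp hw z,
    mul_assoc, mul_inv_cancel_right]

theorem commutatorElement_mul_left_of_mem_center (hv : ⁅v, w⁆ ∈ Subgroup.center G) :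
    ⁅u * v, w⁆ = ⁅u, w⁆ * ⁅v, w⁆ := by
  rw [commutatorElement_mul_left_eq_conj_mul, Subgroup.mem_center_iff.mp hv u,
    mul_inv_cancel_right, Subgroup.mem_center_iff.mp hv]

theorem lowerCentralSeries_two_le_iff {N : Subgroup G} [N.Normal] :
    Subgroup.lowerCentralSeries (⊤ : Subgroup G) 2 ≤ N ↔ ∀ u v w : G, ⁅⁅u, v⁆, w⁆ ∈ N := by
  change ⁅⁅(⊤ : Subgroup G), ⊤⁆, ⊤⁆ ≤ N ↔ _
  refine ⟨fun h u v w => h ?_, fun h => ?_⟩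
  · exact Subgroup.commutator_mem_commutator
      (Subgroup.commutator_mem_commutator (Subgroup.mem_top u) (Subgroup.mem_top v))
      (Subgroup.mem_top w)
  · have mem_comap_center (p : G) :
        p ∈ (Subgroup.center (G ⧸ N)).comap (QuotientGroup.mk' N) ↔ ∀ w, ⁅p, w⁆ ∈ N := by
      rw [Subgroup.mem_comap, Subgroup.mem_center_iff, (QuotientGroup.mk'_surjective N).forall]
      refine forall_congr' fun w => ?_
      rw [← QuotientGroup.eq_one_iff, ← QuotientGroup.mk'_apply, map_commutatorElement,
        commutatorElement_eq_one_iff_mul_comm, eq_comm]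
    have commutator_le : ⁅(⊤ : Subgroup G), ⊤⁆ ≤
        (Subgroup.center (G ⧸ N)).comap (QuotientGroup.mk' N) :=
      Subgroup.commutator_le.mpr fun u _ v _ => (mem_comap_center _).mpr (h u v)
    exact Subgroup.commutator_le.mpr fun p hp w _ => (mem_comap_center p).mp (commutator_le hp) w

theorem map_mem_of_closure_eq_top {H : Type*} [Group H] {S : Set G}
    (hS : Subgroup.closure S = ⊤) {M : Subgroup H} {f : G →* H} (hf : ∀ s ∈ S, f s ∈ M) (g : G) :
    f g ∈ M :=
  (Subgroup.closure_le (M.comap f)).mpr hf (hS ▸ Subgroup.mem_top g)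

/-- The 2-Engel identity, which makes every element commute with all of its conjugates. -/
def IsTwoEngel (G : Type*) [Group G] : Prop :=
  ∀ u v : G, ⁅⁅u, v⁆, v⁆ = 1

theorem isTwoEngel_of_pow_three_eq_one (h : ∀ g : G, g ^ 3 = 1) : IsTwoEngel G := by
  have conj_sq_eq (u v : G) : v ^ 2 * u * (v ^ 2)⁻¹ = v⁻¹ * u * v := by
    have : v ^ 2 = v⁻¹ := eq_inv_of_mul_eq_one_left ((pow_succ v 2).symm.trans (h v))
    rw [this, inv_inv]
  have conj_mul_conj (u v : G) : v * u * v⁻¹ * (v⁻¹ * u * v) = u⁻¹ := by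
    refine eq_inv_of_mul_eq_one_right ?_
    calc u * (v * u * v⁻¹ * (v⁻¹ * u * v)) = u * (v * u * v⁻¹ * (v ^ 2 * u * (v ^ 2)⁻¹)) := by
          rw [conj_sq_eq]
      _ = (u * v) ^ 3 * (v ^ 3)⁻¹ := by simp only [pow_succ, pow_zero]; group
      _ = 1 := by rw [h, h, inv_one, one_mul]
  intro u v
  rw [commutatorElement_eq_one_iff_commute, commutatorElement_def]
  have commute_conjs : Commute (u * v * u⁻¹) (u⁻¹ * v * u) := by
    have := conj_mul_conj v u⁻¹
    rw [inv_inv] at this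
    exact (conj_mul_conj v u).trans this.symm
  have commute_conj : Commute (u * v * u⁻¹) v := by
    have := ((Commute.refl _).mul_right commute_conjs).inv_right
    rwa [conj_mul_conj, inv_inv] at this
  exact commute_conj.mul_left (Commute.refl v).inv_left

theorem unitriangular_mem_iff {M : Subgroup G} :
    (u⁻¹ ∈ M ∧ (u ^ 2 * v)⁻¹ ∈ M ∧ (u ^ 2 * v ^ 2 * w)⁻¹ ∈ M ∧
      (u ^ 2 * v ^ 2 * w ^ 2 * z)⁻¹ ∈ M) ↔ u ∈ M ∧ v ∈ M ∧ w ∈ M ∧ z ∈ M := by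
  simp only [inv_mem_iff]
  refine and_congr_right fun hu => ?_
  rw [Subgroup.mul_mem_cancel_left _ (pow_mem hu 2)]
  refine and_congr_right fun hv => ?_
  have huv := mul_mem (pow_mem hu 2) (pow_mem hv 2)
  rw [Subgroup.mul_mem_cancel_left _ huv]
  refine and_congr_right fun hw => ?_
  rw [Subgroup.mul_mem_cancel_left _ (mul_mem huv (pow_mem hw 2))]

namespace IsTwoEngel

variable (hG : IsTwoEngel G)
include hG

theorem commute_commutator_right (u v : G) : Commute ⁅u, v⁆ v :=
  commutatorElement_eq_one_iff_commute.mp (hG u v)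

theorem commute_commutator_left (u v : G) : Commute ⁅u, v⁆ u := by
  rw [← commutatorElement_inv]
  exact (hG.commute_commutator_right v u).inv_left

theorem commute_conj (u v : G) : Commute (v * u * v⁻¹) u := by
  have := (hG.commute_commutator_right v u).mul_left (Commute.refl u)
  rwa [commutatorElement_def, inv_mul_cancel_right] at this

theorem commutator_inv_left (u v : G) : ⁅u⁻¹, v⁆ = ⁅u, v⁆⁻¹ := by
  rw [commutatorElement_inv_left, ← commutatorElement_inv u v,
    (hG.commute_commutator_left u v).inv_inv.symm.eq, inv_mul_cancel_right]

theorem commute_commutator_commutator_middle (u v w : G) : Commute ⁅⁅u, v⁆, w⁆ v := by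
  have : ⁅⁅u, v⁆, w⁆ = u * v * u⁻¹ * v⁻¹ * (w * v * w⁻¹ * ((w * u) * v * (w * u)⁻¹)⁻¹) := by
    simp only [commutatorElement_def]; group
  rw [this]
  exact ((hG.commute_conj v u).mul_left (Commute.refl v).inv_left).mul_left
    ((hG.commute_conj v w).mul_left (hG.commute_conj v (w * u)).inv_left)

theorem commutator_commutator_swap_left (u v w : G) : ⁅⁅u, v⁆, w⁆ = ⁅⁅v, u⁆, w⁆⁻¹ := by
  rw [← commutatorElement_inv v u, hG.commutator_inv_left]

theorem commutator_commutator_swap_right (u v w : G) : ⁅⁅u, v⁆, w⁆ = ⁅⁅u, w⁆, v⁆⁻¹ := by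
  set p := ⁅u, v⁆ with hp
  set q := ⁅u, w⁆ with hq
  -- Compare `⁅u, v * w⁆` with its conjugate by `v * w`, which is itself by the 2-Engel identity.
  have expand : ⁅u, v * w⁆ = p * ⁅v, q⁆ * q := by
    rw [commutatorElement_mul_right_eq_mul_conj, ← hp, ← hq, commutatorElement_def v q]; group
  have conj_p : v * w * p * (v * w)⁻¹ = ⁅w, p⁆ * p := by
    have hwp : Commute (⁅w, p⁆ * p) v := by
      rw [← commutatorElement_inv p w]
      exact (hG.commute_commutator_commutator_middle u v w).inv_left.mul_left
        (hG.commute_commutator_right u v)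
    calc v * w * p * (v * w)⁻¹ = v * (⁅w, p⁆ * p) * v⁻¹ := by
          rw [commutatorElement_def]; group
      _ = ⁅w, p⁆ * p := by rw [← hwp.eq, mul_inv_cancel_right]
  have conj_vq : v * w * ⁅v, q⁆ * (v * w)⁻¹ = ⁅v, q⁆ := by
    have hvq : Commute ⁅v, q⁆ (v * w) := by
      refine (hG.commute_commutator_left v q).mul_right ?_
      rw [← commutatorElement_inv q v]
      exact (hG.commute_commutator_commutator_middle u w v).inv_left
    rw [← hvq.eq, mul_inv_cancel_right]
  have conj_q : v * w * q * (v * w)⁻¹ = ⁅v, q⁆ * q := by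
    have hqw : w * q * w⁻¹ = q := by
      rw [← (hG.commute_commutator_right u w).eq, mul_inv_cancel_right]
    calc v * w * q * (v * w)⁻¹ = v * (w * q * w⁻¹) * v⁻¹ := by group
      _ = ⁅v, q⁆ * q := by rw [hqw, commutatorElement_def]; group
  have fixed : p * ⁅v, q⁆ * q = ⁅w, p⁆ * p * ⁅v, q⁆ * (⁅v, q⁆ * q) := by
    have := hG.commute_commutator_right u (v * w)
    rw [expand] at this
    calc p * ⁅v, q⁆ * q = v * w * (p * ⁅v, q⁆ * q) * (v * w)⁻¹ := by
          rw [← this.eq, mul_inv_cancel_right]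
      _ = v * w * p * (v * w)⁻¹ * (v * w * ⁅v, q⁆ * (v * w)⁻¹) * (v * w * q * (v * w)⁻¹) := by
          group
      _ = ⁅w, p⁆ * p * ⁅v, q⁆ * (⁅v, q⁆ * q) := by rw [conj_p, conj_vq, conj_q]
  have : ⁅w, p⁆ * ⁅v, q⁆ = 1 := by
    refine (mul_right_cancel (b := ⁅v, q⁆ * q) (mul_left_cancel (a := p) ?_)).symm
    rw [one_mul, ← mul_assoc, fixed, (hG.commute_commutator_right w p).eq]
    simp only [mul_assoc]
  rw [← commutatorElement_inv, eq_inv_of_mul_eq_one_left this, inv_inv, commutatorElement_inv]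

theorem commutator_commutator_rotate (u v w : G) : ⁅⁅u, v⁆, w⁆ = ⁅⁅w, u⁆, v⁆ := by
  rw [hG.commutator_commutator_swap_right, hG.commutator_commutator_swap_left, inv_inv]

theorem commutator_commutator_pow_three (u v w : G) : ⁅⁅u, v⁆, w⁆ ^ 3 = 1 := by
  have conj_inv (u v w : G) : u * ⁅⁅u⁻¹, v⁆, w⁆ * u⁻¹ = ⁅⁅u, v⁆, w⁆⁻¹ := by
    have : Commute ⁅⁅u, v⁆, w⁆ u := by
      rw [hG.commutator_commutator_swap_left]
      exact (hG.commute_commutator_commutator_middle v u w).inv_left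
    rw [hG.commutator_inv_left, hG.commutator_inv_left, ← this.inv_left.eq, mul_inv_cancel_right]
  -- The three factors of the Hall–Witt identity all equal `⁅⁅u, v⁆, w⁆⁻¹`.
  have hall_witt := conj_commutatorElement_left_commutatorElement_mul u v w
  have assoc_conj : ⁅⁅u, v⁆, w⁆⁻¹ * ⁅⁅w, u⁆, v⁆⁻¹ * ⁅⁅v, w⁆, u⁆⁻¹ = 1 := by
    rw [← conj_inv, ← conj_inv, ← conj_inv, ← hall_witt]
    simp only [mul_assoc]
  rw [hG.commutator_commutator_rotate v w u, ← hG.commutator_commutator_rotate u v w] at assoc_conj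
  rw [← inv_eq_one, ← inv_pow, pow_succ, pow_two, assoc_conj]

theorem commutator_commutator_commutator_eq_one (u v w z : G) : ⁅⁅⁅u, v⁆, w⁆, z⁆ = 1 := by
  have swap_left_inner (u v w z : G) : ⁅⁅⁅u, v⁆, w⁆, z⁆ = ⁅⁅⁅v, u⁆, w⁆, z⁆⁻¹ := by
    rw [hG.commutator_commutator_swap_left u, hG.commutator_inv_left]
  have swap_right_inner (u v w z : G) : ⁅⁅⁅u, v⁆, w⁆, z⁆ = ⁅⁅⁅u, w⁆, v⁆, z⁆⁻¹ := by
    rw [hG.commutator_commutator_swap_right u, hG.commutator_inv_left]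
  -- The two evaluations of `⁅⁅u, v⁆, ⁅w, z⁆⁆` make it both symmetric and antisymmetric under
  -- exchange of its two entries, so its square is trivial as well as its cube.
  have eq_commutator : ⁅⁅u, v⁆, ⁅w, z⁆⁆ = ⁅⁅⁅u, v⁆, w⁆, z⁆ := by
    rw [hG.commutator_commutator_rotate u v, swap_right_inner w z u v, swap_left_inner w u z v,
      hG.commutator_commutator_swap_right ⁅u, w⁆ z v, swap_right_inner u w v z, inv_inv, inv_inv]
  have eq_commutator_swap : ⁅⁅w, z⁆, ⁅u, v⁆⁆ = ⁅⁅⁅u, v⁆, w⁆, z⁆ :=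
    hG.commutator_commutator_rotate _ _ _
  have sq_eq_one : ⁅⁅⁅u, v⁆, w⁆, z⁆ ^ 2 = 1 := by
    rw [← commutatorElement_inv, eq_commutator, inv_eq_iff_mul_eq_one] at eq_commutator_swap
    rw [pow_two, eq_commutator_swap]
  simpa only [pow_succ _ 2, sq_eq_one, one_mul] using
    hG.commutator_commutator_pow_three ⁅u, v⁆ w z

theorem commutator_commutator_mem_center (u v w : G) : ⁅⁅u, v⁆, w⁆ ∈ Subgroup.center G :=
  Subgroup.mem_center_iff.mpr fun z => (commutatorElement_eq_one_iff_mul_comm.mp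
    (hG.commutator_commutator_commutator_eq_one u v w z)).symm

theorem commutator_commutator_mul_right (u v w z : G) :
    ⁅⁅u, v⁆, w * z⁆ = ⁅⁅u, v⁆, w⁆ * ⁅⁅u, v⁆, z⁆ :=
  commutatorElement_mul_right_of_mem_center (hG.commutator_commutator_mem_center u v z)

theorem commutator_commutator_mul_middle (u v w z : G) :
    ⁅⁅u, v * w⁆, z⁆ = ⁅⁅u, v⁆, z⁆ * ⁅⁅u, w⁆, z⁆ := by
  rw [hG.commutator_commutator_rotate, hG.commutator_commutator_mul_right,
    ← hG.commutator_commutator_rotate u v, ← hG.commutator_commutator_rotate u w]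

theorem commutator_commutator_mul_left (u v w z : G) :
    ⁅⁅u * v, w⁆, z⁆ = ⁅⁅u, w⁆, z⁆ * ⁅⁅v, w⁆, z⁆ := by
  rw [hG.commutator_commutator_rotate, hG.commutator_commutator_mul_middle,
    ← hG.commutator_commutator_rotate u w, ← hG.commutator_commutator_rotate v w]

/-- The triple commutator `⁅⁅u, v⁆, w⁆` of a 2-Engel group as a trilinear form with values in the
centre. -/
def tripleCommutator : G →* G →* G →* Subgroup.center G :=
  MonoidHom.mk'
    (fun u => MonoidHom.mk'
      (fun v => MonoidHom.mk'
        (fun w => ⟨⁅⁅u, v⁆, w⁆, hG.commutator_commutator_mem_center u v w⟩)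
        fun w z => Subtype.ext (hG.commutator_commutator_mul_right u v w z))
      fun v w => MonoidHom.ext fun z =>
        Subtype.ext (hG.commutator_commutator_mul_middle u v w z))
    fun u v => MonoidHom.ext fun w => MonoidHom.ext fun z =>
      Subtype.ext (hG.commutator_commutator_mul_left u v w z)

theorem coe_tripleCommutator (u v w : G) : (hG.tripleCommutator u v w : G) = ⁅⁅u, v⁆, w⁆ :=
  rfl

theorem tripleCommutator_swap_right (u v w : G) :
    hG.tripleCommutator u v w = (hG.tripleCommutator u w v)⁻¹ :=
  Subtype.ext (hG.commutator_commutator_swap_right u v w)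

theorem tripleCommutator_rotate (u v w : G) :
    hG.tripleCommutator u v w = hG.tripleCommutator w u v :=
  Subtype.ext (hG.commutator_commutator_rotate u v w)

theorem tripleCommutator_self_right (u v : G) : hG.tripleCommutator u v v = 1 :=
  Subtype.ext (hG u v)

theorem tripleCommutator_self_outer (u v : G) : hG.tripleCommutator u v u = 1 := by
  rw [← hG.tripleCommutator_rotate, hG.tripleCommutator_self_right]

theorem tripleCommutator_mem_of_closure_eq_top {S : Set G} (hS : Subgroup.closure S = ⊤)
    {M : Subgroup (Subgroup.center G)}
    (hM : ∀ u ∈ S, ∀ v ∈ S, ∀ w ∈ S, hG.tripleCommutator u v w ∈ M) (u v w : G) :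
    hG.tripleCommutator u v w ∈ M := by
  have mem_right (u) (hu : u ∈ S) (v) (hv : v ∈ S) : ∀ w, hG.tripleCommutator u v w ∈ M :=
    map_mem_of_closure_eq_top hS (hM u hu v hv)
  have mem_middle (u) (hu : u ∈ S) (w) : ∀ v, hG.tripleCommutator u v w ∈ M :=
    map_mem_of_closure_eq_top (f := (hG.tripleCommutator u).flip w) hS
      fun v hv => mem_right u hu v hv w
  exact map_mem_of_closure_eq_top (f := (hG.tripleCommutator.flip v).flip w) hS
    (fun u hu => mem_middle u hu w v) u

theorem lowerCentralSeries_two_le_iff_of_closure_range_eq_top {ι : Type*} [LinearOrder ι]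
    {a : ι → G} (ha : Subgroup.closure (Set.range a) = ⊤) {N : Subgroup G} [N.Normal] :
    Subgroup.lowerCentralSeries (⊤ : Subgroup G) 2 ≤ N ↔
      ∀ i j k, i < j → j < k → ⁅⁅a i, a j⁆, a k⁆ ∈ N := by
  rw [lowerCentralSeries_two_le_iff]
  refine ⟨fun h i j k _ _ => h _ _ _, fun h => ?_⟩
  have mem_of_generators : ∀ i j k, ⁅⁅a i, a j⁆, a k⁆ ∈ N := by
    refine forall_of_forall_lt_of_symm (fun i j k hijk => ?_) (fun i j k hijk => ?_)
      (fun i j => hG (a i) (a j) ▸ N.one_mem) h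
    · rwa [hG.commutator_commutator_swap_left, inv_mem_iff]
    · rwa [hG.commutator_commutator_swap_right, inv_mem_iff]
  refine hG.tripleCommutator_mem_of_closure_eq_top
    (M := N.subgroupOf (Subgroup.center G)) ha ?_
  rintro _ ⟨i, rfl⟩ _ ⟨j, rfl⟩ _ ⟨k, rfl⟩
  exact mem_of_generators i j k

theorem lowerCentralSeries_two_le_iff_of_closure_eq_top {a b c d : G}
    (h : Subgroup.closure {a, b, c, d} = ⊤) {N : Subgroup G} [N.Normal] :
    Subgroup.lowerCentralSeries (⊤ : Subgroup G) 2 ≤ N ↔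
      ⁅⁅b, c⁆, d⁆ ∈ N ∧ ⁅⁅a, c⁆, d⁆ ∈ N ∧ ⁅⁅a, b⁆, d⁆ ∈ N ∧ ⁅⁅a, b⁆, c⁆ ∈ N := by
  have h_range : Subgroup.closure (Set.range ![a, b, c, d]) = ⊤ := by
    simpa only [Matrix.range_cons, Matrix.range_empty, Set.union_empty, Set.singleton_union] using h
  rw [hG.lowerCentralSeries_two_le_iff_of_closure_range_eq_top h_range]
  exact forall_fin_four_lt_iff (Q := fun i j k =>
    ⁅⁅![a, b, c, d] i, ![a, b, c, d] j⁆, ![a, b, c, d] k⁆ ∈ N)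

/-- The homomorphism `g ↦ ∏_{i < j} ⁅⁅aᵢ, aⱼ⁆, g⁆` for `(a₀, a₁, a₂, a₃) = (a, b, c, d)`, which
measures the effect of reversing the product `a * b * c * d`. -/
def reversalPairing (a b c d : G) : G →* Subgroup.center G :=
  hG.tripleCommutator a b * (hG.tripleCommutator a c * hG.tripleCommutator b c) *
    (hG.tripleCommutator a d * hG.tripleCommutator b d * hG.tripleCommutator c d)

theorem coe_reversalPairing (a b c d g : G) :
    (hG.reversalPairing a b c d g : G) = ⁅(d * c * b * a)⁻¹ * (a * b * c * d), g⁆ := by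
  have factor : (d * c * b * a)⁻¹ * (a * b * c * d) =
      ⁅a⁻¹, b⁻¹⁆ * ⁅(a * b)⁻¹, c⁻¹⁆ * ⁅(a * b * c)⁻¹, d⁻¹⁆ := by
    simp only [commutatorElement_def]; group
  have expand : hG.reversalPairing a b c d g = hG.tripleCommutator a⁻¹ b⁻¹ g *
      hG.tripleCommutator (a * b)⁻¹ c⁻¹ g * hG.tripleCommutator (a * b * c)⁻¹ d⁻¹ g := by
    simp only [reversalPairing, map_mul, map_inv, MonoidHom.mul_apply, MonoidHom.inv_apply, inv_inv]
  rw [factor, commutatorElement_mul_left_of_mem_center (hG.commutator_commutator_mem_center _ _ _),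
    commutatorElement_mul_left_of_mem_center (hG.commutator_commutator_mem_center _ _ _), expand]
  rfl

theorem mul_mul_reverse_inv_mul_eq_reversalPairing (a b c d g : G) :
    a * b * c * d * (d * c * b * a)⁻¹ * g * ((a * b * c * d)⁻¹ * (d * c * b * a)) * g⁻¹ =
      hG.reversalPairing a b c d ((d * c * b * a)⁻¹ * g) := by
  -- The left side is the conjugate by `d * c * b * a` of the commutator in `coe_reversalPairing`.
  have central := Subgroup.mem_center_iff.mp
    (hG.reversalPairing a b c d ((d * c * b * a)⁻¹ * g)).2 (d * c * b * a)
  rw [← mul_inv_eq_iff_eq_mul, coe_reversalPairing] at central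
  rw [coe_reversalPairing, ← central]
  generalize a * b * c * d = p
  generalize d * c * b * a = q
  simp only [commutatorElement_def]
  group

theorem reversalPairing_apply_fst (a b c d : G) : hG.reversalPairing a b c d a =
    hG.tripleCommutator a b c * hG.tripleCommutator a b d * hG.tripleCommutator a c d := by
  simp only [reversalPairing, MonoidHom.mul_apply, hG.tripleCommutator_self_outer, one_mul,
    hG.tripleCommutator_rotate _ _ a, mul_assoc]

theorem reversalPairing_apply_snd (a b c d : G) : hG.reversalPairing a b c d b =
    (hG.tripleCommutator a b c * hG.tripleCommutator a b d)⁻¹ * hG.tripleCommutator b c d := by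
  simp only [reversalPairing, MonoidHom.mul_apply, hG.tripleCommutator_self_outer, one_mul,
    hG.tripleCommutator_self_right, hG.tripleCommutator_swap_right a _ b,
    hG.tripleCommutator_rotate c d b, mul_inv, mul_assoc]

theorem reversalPairing_apply_trd (a b c d : G) : hG.reversalPairing a b c d c =
    hG.tripleCommutator a b c * (hG.tripleCommutator a c d * hG.tripleCommutator b c d)⁻¹ := by
  simp only [reversalPairing, MonoidHom.mul_apply, hG.tripleCommutator_self_outer, mul_one,
    hG.tripleCommutator_self_right, hG.tripleCommutator_swap_right _ d c, mul_inv]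

theorem reversalPairing_apply_fth (a b c d : G) : hG.reversalPairing a b c d d =
    hG.tripleCommutator a b d * hG.tripleCommutator a c d * hG.tripleCommutator b c d := by
  simp only [reversalPairing, MonoidHom.mul_apply, hG.tripleCommutator_self_right, mul_one,
    mul_assoc]

theorem reversalPairing_apply_reverse (a b c d : G) :
    hG.reversalPairing a b c d (d * c * b * a) =
      hG.tripleCommutator b c d * hG.tripleCommutator a c d * hG.tripleCommutator a b d *
        hG.tripleCommutator a b c := by
  simp only [map_mul, reversalPairing_apply_fst, reversalPairing_apply_snd,
    reversalPairing_apply_trd, reversalPairing_apply_fth]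
  apply Additive.ofMul.injective
  simp only [ofMul_mul, ofMul_inv]
  abel

theorem reversalPairing_apply_reverse_inv_mul_fst (a b c d : G) :
    hG.reversalPairing a b c d ((d * c * b * a)⁻¹ * a) =
      (hG.tripleCommutator b c d)⁻¹ := by
  rw [map_mul, map_inv, reversalPairing_apply_reverse, reversalPairing_apply_fst]
  apply Additive.ofMul.injective
  simp only [ofMul_mul, ofMul_inv]
  abel

theorem reversalPairing_apply_reverse_inv_mul_snd_inv (a b c d : G) :
    hG.reversalPairing a b c d ((d * c * b * a)⁻¹ * b⁻¹) =
      (hG.tripleCommutator b c d ^ 2 * hG.tripleCommutator a c d)⁻¹ := by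
  rw [map_mul, map_inv, map_inv, reversalPairing_apply_reverse, reversalPairing_apply_snd]
  apply Additive.ofMul.injective
  simp only [ofMul_mul, ofMul_inv, ofMul_pow]
  abel

theorem reversalPairing_apply_reverse_inv_mul_trd (a b c d : G) :
    hG.reversalPairing a b c d ((d * c * b * a)⁻¹ * c) =
      (hG.tripleCommutator b c d ^ 2 * hG.tripleCommutator a c d ^ 2 *
        hG.tripleCommutator a b d)⁻¹ := by
  rw [map_mul, map_inv, reversalPairing_apply_reverse, reversalPairing_apply_trd]
  apply Additive.ofMul.injective
  simp only [ofMul_mul, ofMul_inv, ofMul_pow]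
  abel

theorem reversalPairing_apply_reverse_inv_mul_fth_inv (a b c d : G) :
    hG.reversalPairing a b c d ((d * c * b * a)⁻¹ * d⁻¹) =
      (hG.tripleCommutator b c d ^ 2 * hG.tripleCommutator a c d ^ 2 *
        hG.tripleCommutator a b d ^ 2 * hG.tripleCommutator a b c)⁻¹ := by
  rw [map_mul, map_inv, map_inv, reversalPairing_apply_reverse, reversalPairing_apply_fth]
  apply Additive.ofMul.injective
  simp only [ofMul_mul, ofMul_inv, ofMul_pow]
  abel

theorem reversalPairing_mem_iff {a b c d : G} {M : Subgroup (Subgroup.center G)} :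
    (hG.reversalPairing a b c d ((d * c * b * a)⁻¹ * a) ∈ M ∧
      hG.reversalPairing a b c d ((d * c * b * a)⁻¹ * b⁻¹) ∈ M ∧
      hG.reversalPairing a b c d ((d * c * b * a)⁻¹ * c) ∈ M ∧
      hG.reversalPairing a b c d ((d * c * b * a)⁻¹ * d⁻¹) ∈ M) ↔
    hG.tripleCommutator b c d ∈ M ∧ hG.tripleCommutator a c d ∈ M ∧
      hG.tripleCommutator a b d ∈ M ∧ hG.tripleCommutator a b c ∈ M := by
  rw [reversalPairing_apply_reverse_inv_mul_fst, reversalPairing_apply_reverse_inv_mul_snd_inv,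
    reversalPairing_apply_reverse_inv_mul_trd, reversalPairing_apply_reverse_inv_mul_fth_inv]
  exact unitriangular_mem_iff

end IsTwoEngel

/-- The element `P_i` formed from an arbitrary quadruple `y` in place of `(x₁, x₂, x₃, x₄)`. -/
def relator (y : Fin 4 → G) (i : Fin 4) : G :=
  y 0 * (y 1)⁻¹ * y 2 * (y 3)⁻¹ * (y 0)⁻¹ * y 1 * (y 2)⁻¹ * y 3 * y i *
    (y 3 * (y 2)⁻¹ * y 1 * (y 0)⁻¹ * (y 3)⁻¹ * y 2 * (y 1)⁻¹ * y 0) * (y i)⁻¹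

theorem relator_eq_reversalPairing (hG : IsTwoEngel G) (y : Fin 4 → G) (i : Fin 4) :
    relator y i = hG.reversalPairing (y 0) (y 1)⁻¹ (y 2) (y 3)⁻¹
      (((y 3)⁻¹ * y 2 * (y 1)⁻¹ * y 0)⁻¹ * y i) := by
  rw [← hG.mul_mul_reverse_inv_mul_eq_reversalPairing]
  simp only [relator, mul_inv_rev, inv_inv, mul_assoc]

theorem closure_alternating_inv_eq_closure_range (y : Fin 4 → G) :
    Subgroup.closure {y 0, (y 1)⁻¹, y 2, (y 3)⁻¹} = Subgroup.closure (Set.range y) := by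
  refine le_antisymm ?_ ?_ <;> rw [Subgroup.closure_le]
  · simp [Set.insert_subset_iff, Subgroup.mem_closure_of_mem]
  · rintro _ ⟨i, rfl⟩
    rw [SetLike.mem_coe]
    fin_cases i
    · exact Subgroup.mem_closure_of_mem (by simp)
    · exact inv_mem_iff.mp (Subgroup.mem_closure_of_mem (by simp))
    · exact Subgroup.mem_closure_of_mem (by simp)
    · exact inv_mem_iff.mp (Subgroup.mem_closure_of_mem (by simp))

theorem lowerCentralSeries_two_le_iff_relator_mem (hG : IsTwoEngel G) {y : Fin 4 → G}
    (hy : Subgroup.closure (Set.range y) = ⊤) {N : Subgroup G} [N.Normal] :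
    Subgroup.lowerCentralSeries (⊤ : Subgroup G) 2 ≤ N ↔
      {relator y 0, relator y 1, relator y 2, relator y 3} ⊆ (N : Set G) := by
  rw [← closure_alternating_inv_eq_closure_range] at hy
  rw [hG.lowerCentralSeries_two_le_iff_of_closure_eq_top hy]
  simp only [Set.insert_subset_iff, Set.singleton_subset_iff, SetLike.mem_coe,
    relator_eq_reversalPairing hG]
  simpa only [inv_inv, Subgroup.mem_subgroupOf, hG.coe_tripleCommutator] using
    (hG.reversalPairing_mem_iff (a := y 0) (b := (y 1)⁻¹) (c := y 2) (d := (y 3)⁻¹)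
      (M := N.subgroupOf (Subgroup.center G))).symm

theorem normalClosure_P_eq_gamma3_general (hG : IsTwoEngel G) {y : Fin 4 → G}
    (hy : Subgroup.closure (Set.range y) = ⊤) :
    Subgroup.normalClosure {relator y 0, relator y 1, relator y 2, relator y 3} =
      Subgroup.lowerCentralSeries (⊤ : Subgroup G) 2 :=
  le_antisymm
    (Subgroup.normalClosure_le_normal ((lowerCentralSeries_two_le_iff_relator_mem hG hy).mp le_rfl))
    ((lowerCentralSeries_two_le_iff_relator_mem hG hy).mpr Subgroup.subset_normalClosure)

end Group

theorem B43.pow_three_eq_one (g : B43) : g ^ 3 = 1 := by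
  induction g using QuotientGroup.induction_on with
  | H v => exact (QuotientGroup.eq_one_iff (v ^ 3)).mpr (Subgroup.subset_normalClosure ⟨v, rfl⟩)

theorem closure_range_x : Subgroup.closure (Set.range x) = ⊤ := by
  rw [show x = QuotientGroup.mk' _ ∘ FreeGroup.of from rfl, Set.range_comp,
    ← MonoidHom.map_closure, FreeGroup.closure_range_of, ← MonoidHom.range_eq_map,
    QuotientGroup.range_mk']

/-- The normal closure of `{P₁, P₂, P₃, P₄}` in `B(4,3)` equals the third term
`γ₃(B(4,3))` of the lower central series (Mathlib: `lowerCentralSeries B43 2`). -/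
theorem normalClosure_P_eq_gamma3 :
    Subgroup.normalClosure ({P 0, P 1, P 2, P 3} : Set B43) =
      Subgroup.lowerCentralSeries (⊤ : Subgroup B43) 2 :=
  normalClosure_P_eq_gamma3_general (isTwoEngel_of_pow_three_eq_one B43.pow_three_eq_one)
    closure_range_x
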